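/- arXiv:1203.3074 — 7 statements merged into one kernel-verified Lean document; each statement's English description precedes it below -/
import Mathlib

section
/- Let f : [a,b] → ℝ be continuous on [a,b] and differentiable on (a,b), and assume |f′(x)| ≤ M for all x ∈ (a,b). Then for all x ∈ [a,b], |f(x) − (1/(b−a)) ∫_a^b f(t) dt| ≤ (M/(b−a)) [((b−a)/2)² + (x − (a+b)/2)²]. -/
/-!
The mean value inequality makes `f` Lipschitz with constant `M` on the closed interval, so
`‖f x - f t‖ ≤ M * |x - t|` for all `t` in `[a, b]`. Averaging over `t`, the distance from `f x` to
the mean of `f` is at most `M` times the mean of `|x - t|`, and the bracket on the right-hand side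
is exactly the integral of `|x - t|` over `[a, b]`.
-/

open MeasureTheory Set intervalIntegral

open scoped NNReal Interval

theorem lipschitzOnWith_closure_of_nnnorm_hasDerivWithinAt_le
    {𝕜 E : Type*} [RCLike 𝕜] [NormedAddCommGroup E] [NormedSpace 𝕜 E]
    {f f' : 𝕜 → E} {s : Set 𝕜} {C : ℝ≥0} (hs : Convex ℝ s) (hcont : ContinuousOn f (closure s))
    (hderiv : ∀ x ∈ s, HasDerivWithinAt f (f' x) s x) (hbound : ∀ x ∈ s, ‖f' x‖₊ ≤ C) :
    LipschitzOnWith C f (closure s) :=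
  (hs.lipschitzOnWith_of_nnnorm_hasDerivWithin_le hderiv hbound).closure hcont

theorem integral_abs_sub_of_mem_Icc {a b x : ℝ} (hx : x ∈ Icc a b) :
    ∫ t in a..b, |x - t| = ((b - a) / 2) ^ 2 + (x - (a + b) / 2) ^ 2 := by
  have hint (c d : ℝ) : IntervalIntegrable (fun t ↦ |x - t|) volume c d :=
    Continuous.intervalIntegrable (by fun_prop) c d
  have hleft : ∫ t in a..x, |x - t| = (x - a) ^ 2 / 2 := calc
    ∫ t in a..x, |x - t| = ∫ t in a..x, (x - t) :=
      integral_congr_Ioo_of_le hx.1 fun t ht ↦ abs_of_nonneg (sub_nonneg.2 ht.2.le)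
    _ = (x - a) ^ 2 / 2 := by simp [integral_comp_sub_left (fun u : ℝ ↦ u)]
  have hright : ∫ t in x..b, |x - t| = (b - x) ^ 2 / 2 := calc
    ∫ t in x..b, |x - t| = ∫ t in x..b, (t - x) :=
      integral_congr_Ioo_of_le hx.2 fun t ht ↦ by
        rw [abs_sub_comm, abs_of_nonneg (sub_nonneg.2 ht.1.le)]
    _ = (b - x) ^ 2 / 2 := by simp [integral_comp_sub_right (fun u : ℝ ↦ u)]
  rw [← integral_add_adjacent_intervals (hint a x) (hint x b), hleft, hright]
  ring

section Average

variable {E : Type*} [NormedAddCommGroup E] [NormedSpace ℝ E] [CompleteSpace E]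

theorem norm_sub_average_le_average_norm_sub {α : Type*} [MeasurableSpace α] {μ : Measure α}
    [IsFiniteMeasure μ] [NeZero μ] {f : α → E} (hf : Integrable f μ) (c : E) :
    ‖c - ⨍ t, f t ∂μ‖ ≤ ⨍ t, ‖c - f t‖ ∂μ := by
  have hsub : c - ⨍ t, f t ∂μ = ⨍ t, (c - f t) ∂μ := by
    rw [average_eq' _ (fun t ↦ c - f t), integral_sub (integrable_const c).to_average hf.to_average,
      ← average_eq', ← average_eq', average_const]
  rw [hsub]
  exact norm_integral_le_integral_norm _

theorem norm_sub_intervalAverage_le_intervalAverage_norm_sub {a b : ℝ} (hab : a ≠ b) {f : ℝ → E}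
    (hf : IntervalIntegrable f volume a b) (c : E) :
    ‖c - ⨍ t in a..b, f t‖ ≤ ⨍ t in a..b, ‖c - f t‖ := by
  have : IsFiniteMeasure (volume.restrict (Ι a b)) := ⟨by simp [uIoc]⟩
  have : NeZero (volume.restrict (Ι a b)) := ⟨by simpa [uIoc] using hab.symm.lt_of_le⟩
  exact norm_sub_average_le_average_norm_sub hf.def' c

theorem norm_sub_intervalAverage_le_of_lipschitzOnWith {a b : ℝ} (hab : a < b) {K : ℝ≥0}
    {f : ℝ → E} (hf : LipschitzOnWith K f (Icc a b)) {x : ℝ} (hx : x ∈ Icc a b) :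
    ‖f x - ⨍ t in a..b, f t‖ ≤
      K / (b - a) * (((b - a) / 2) ^ 2 + (x - (a + b) / 2) ^ 2) := by
  have hint : IntervalIntegrable f volume a b := hf.continuousOn.intervalIntegrable_of_Icc hab.le
  have hba : 0 ≤ (b - a)⁻¹ := inv_nonneg.2 (sub_nonneg.2 hab.le)
  calc ‖f x - ⨍ t in a..b, f t‖
      ≤ ⨍ t in a..b, ‖f x - f t‖ :=
        norm_sub_intervalAverage_le_intervalAverage_norm_sub hab.ne hint (f x)
    _ = (b - a)⁻¹ * ∫ t in a..b, ‖f x - f t‖ := interval_average_eq _ a b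
    _ ≤ (b - a)⁻¹ * ∫ t in a..b, K * |x - t| := by
        refine mul_le_mul_of_nonneg_left (integral_mono_on hab.le ?_ ?_ ?_) hba
        · exact (intervalIntegrable_const.sub hint).norm
        · exact Continuous.intervalIntegrable (by fun_prop) a b
        · exact fun t ht ↦ hf.norm_sub_le hx ht
    _ = K / (b - a) * (((b - a) / 2) ^ 2 + (x - (a + b) / 2) ^ 2) := by
        rw [intervalIntegral.integral_const_mul, integral_abs_sub_of_mem_Icc hx]
        ring

theorem ostrowski_inequality_general {a b M : ℝ} (hab : a < b) {f f' : ℝ → E}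
    (hcont : ContinuousOn f (Icc a b))
    (hderiv : ∀ x ∈ Ioo a b, HasDerivAt f (f' x) x)
    (hbound : ∀ x ∈ Ioo a b, ‖f' x‖ ≤ M) {x : ℝ} (hx : x ∈ Icc a b) :
    ‖f x - ⨍ t in a..b, f t‖ ≤
      M / (b - a) * (((b - a) / 2) ^ 2 + (x - (a + b) / 2) ^ 2) := by
  obtain ⟨c, hc⟩ := nonempty_Ioo.2 hab
  lift M to ℝ≥0 using (norm_nonneg _).trans (hbound c hc)
  have hlip : LipschitzOnWith M f (Icc a b) := by
    rw [← closure_Ioo hab.ne] at hcont ⊢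
    exact lipschitzOnWith_closure_of_nnnorm_hasDerivWithinAt_le (convex_Ioo a b) hcont
      (fun y hy ↦ (hderiv y hy).hasDerivWithinAt) hbound
  exact norm_sub_intervalAverage_le_of_lipschitzOnWith hab hlip hx

end Average

/-- **Ostrowski's inequality.** If `f` is continuous on `[a,b]`, differentiable on `(a,b)`
with `|f'(x)| ≤ M` there, then for all `x ∈ [a,b]`,
`|f(x) − (1/(b−a)) ∫_a^b f| ≤ (M/(b−a)) [((b−a)/2)² + (x − (a+b)/2)²]`. -/
theorem ostrowski_inequality (a b M : ℝ) (hab : a < b) (hM : 0 ≤ M)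
    (f f' : ℝ → ℝ)
    (hcont : ContinuousOn f (Icc a b))
    (hderiv : ∀ x ∈ Ioo a b, HasDerivAt f (f' x) x)
    (hbound : ∀ x ∈ Ioo a b, |f' x| ≤ M) :
    ∀ x ∈ Icc a b,
      |f x - (1 / (b - a)) * ∫ t in a..b, f t| ≤
        (M / (b - a)) * (((b - a) / 2) ^ 2 + (x - (a + b) / 2) ^ 2) := by
  intro x hx
  simpa only [interval_average_eq_div, Real.norm_eq_abs, one_div_mul_eq_div] using
    ostrowski_inequality_general hab hcont hderiv hbound hx
end

section
/- Let f, g : [a,b] → ℝ be absolutely continuous functions whose first derivatives f′ and g′ are (essentially) bounded. Then |T(f,g)| ≤ (1/12)(b−a)² ‖f′‖_∞ ‖g′‖_∞, where T(f,g) = (1/(b−a)) ∫_a^b f(x)g(x) dx − ((1/(b−a)) ∫_a^b f(x) dx)((1/(b−a)) ∫_a^b g(x) dx). -/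
open MeasureTheory Set intervalIntegral

/-!
`T(f, g)` is the covariance of `f(U)` and `g(U)` for `U` uniformly distributed on `[a, b]`.
By the Cauchy–Schwarz inequality it is enough to bound variances. Since the mean minimises the mean
square deviation, `Var f(U) ≤ 𝔼 (f(U) - f(𝔼 U))² ≤ ‖f'‖∞² Var U`, and `Var U = (b - a)² / 12`.
-/

open ProbabilityTheory
open scoped NNReal

section Covariance

variable {Ω : Type*} {mΩ : MeasurableSpace Ω} {μ : Measure Ω} {X Y : Ω → ℝ}

theorem sq_covariance_le_variance_mul_variance [IsFiniteMeasure μ]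
    (hX : MemLp X 2 μ) (hY : MemLp Y 2 μ) :
    cov[X, Y; μ] ^ 2 ≤ Var[X; μ] * Var[Y; μ] := by
  have quadratic_nonneg (t : ℝ) :
      0 ≤ Var[X; μ] * (t * t) + 2 * cov[X, Y; μ] * t + Var[Y; μ] := by
    calc 0 ≤ Var[t • X + Y; μ] := variance_nonneg _ _
      _ = _ := by
        rw [variance_add (hX.const_smul t) hY, variance_smul, covariance_smul_left]
        ring
  have discrim_nonpos := discrim_le_zero quadratic_nonneg
  rw [discrim] at discrim_nonpos
  linarith

theorem variance_le_integral_sub_sq [IsProbabilityMeasure μ]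
    (hX : AEStronglyMeasurable X μ) (c : ℝ) :
    Var[X; μ] ≤ ∫ ω, (X ω - c) ^ 2 ∂μ := by
  rw [← variance_sub_const hX c]
  exact variance_le_expectation_sq (hX.sub aestronglyMeasurable_const)

variable {f g : ℝ → ℝ} {K L : ℝ≥0}

theorem variance_comp_le_of_lipschitzWith [IsProbabilityMeasure μ]
    (hf : LipschitzWith K f) (hX : MemLp X 2 μ) :
    Var[f ∘ X; μ] ≤ K ^ 2 * Var[X; μ] := by
  have sub_sq_le (ω : Ω) : (f (X ω) - f μ[X]) ^ 2 ≤ K ^ 2 * (X ω - μ[X]) ^ 2 := by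
    rw [← mul_pow, sq_le_sq, abs_mul, NNReal.abs_eq]
    exact hf.dist_le_mul (X ω) μ[X]
  calc Var[f ∘ X; μ] ≤ ∫ ω, (f (X ω) - f μ[X]) ^ 2 ∂μ :=
        variance_le_integral_sub_sq (hf.continuous.comp_aestronglyMeasurable hX.1) _
    _ ≤ ∫ ω, K ^ 2 * (X ω - μ[X]) ^ 2 ∂μ :=
        integral_mono_of_nonneg (.of_forall fun ω ↦ sq_nonneg _)
          ((hX.sub (memLp_const _)).integrable_sq.const_mul _) (.of_forall sub_sq_le)
    _ = K ^ 2 * Var[X; μ] := by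
        rw [MeasureTheory.integral_const_mul, variance_eq_integral hX.aemeasurable]

theorem memLp_comp_of_lipschitzWith {E F : Type*} [NormedAddCommGroup E] [NormedAddCommGroup F]
    [IsFiniteMeasure μ] {p : ENNReal} {f : E → F} {X : Ω → E}
    (hf : LipschitzWith K f) (hX : MemLp X p μ) : MemLp (f ∘ X) p μ := by
  have sub_memLp : MemLp ((fun x ↦ f x - f 0) ∘ X) p μ :=
    (hf.sub (.const (f 0))).comp_memLp (sub_self _) hX
  convert sub_memLp.add (memLp_const (f 0)) using 1
  ext ω
  simp

theorem abs_covariance_comp_comp_le_of_lipschitzWith [IsProbabilityMeasure μ]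
    (hf : LipschitzWith K f) (hg : LipschitzWith L g) (hX : MemLp X 2 μ) :
    |cov[f ∘ X, g ∘ X; μ]| ≤ K * L * Var[X; μ] := by
  have var_nonneg : 0 ≤ Var[X; μ] := variance_nonneg X μ
  refine abs_le_of_sq_le_sq ?_ (by positivity)
  calc cov[f ∘ X, g ∘ X; μ] ^ 2 ≤ Var[f ∘ X; μ] * Var[g ∘ X; μ] :=
        sq_covariance_le_variance_mul_variance (memLp_comp_of_lipschitzWith hf hX)
          (memLp_comp_of_lipschitzWith hg hX)
    _ ≤ (K ^ 2 * Var[X; μ]) * (L ^ 2 * Var[X; μ]) :=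
        mul_le_mul (variance_comp_le_of_lipschitzWith hf hX)
          (variance_comp_le_of_lipschitzWith hg hX) (variance_nonneg _ μ) (by positivity)
    _ = (K * L * Var[X; μ]) ^ 2 := by ring

end Covariance

section UniformMeasure

variable {a b : ℝ}

theorem isProbabilityMeasure_cond_Icc (hab : a < b) : IsProbabilityMeasure volume[|Icc a b] :=
  cond_isProbabilityMeasure_of_finite (by simpa using hab) (by simp)

theorem memLp_id_cond_Icc (p : ENNReal) : MemLp id p volume[|Icc a b] :=
  memLp_of_bounded (ae_cond_mem measurableSet_Icc) aestronglyMeasurable_id p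

theorem integral_cond_Icc {E : Type*} [NormedAddCommGroup E] [NormedSpace ℝ E] (hab : a ≤ b)
    (f : ℝ → E) : ∫ x, f x ∂volume[|Icc a b] = (1 / (b - a)) • ∫ x in a..b, f x := by
  rw [ProbabilityTheory.cond, MeasureTheory.integral_smul_measure, integral_Icc_eq_integral_Ioc,
    ← integral_of_le hab, Real.volume_Icc, ENNReal.toReal_inv,
    ENNReal.toReal_ofReal (sub_nonneg.2 hab), one_div]

theorem variance_id_cond_Icc (hab : a < b) : Var[id; volume[|Icc a b]] = (b - a) ^ 2 / 12 := by
  have length_pos : 0 < b - a := sub_pos.2 hab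
  have mean_eq : ∫ x, id x ∂volume[|Icc a b] = (a + b) / 2 := by
    simp only [id, integral_cond_Icc hab.le, integral_id, smul_eq_mul]
    field_simp
    ring
  rw [variance_eq_integral aemeasurable_id, mean_eq]
  simp only [id]
  rw [integral_cond_Icc hab.le, integral_comp_sub_right (fun x ↦ x ^ 2), integral_pow, smul_eq_mul]
  field_simp
  ring

end UniformMeasure

section CebysevFunctional

/-- The Čebyšev functional `T(f, g)` on `[a, b]`: the mean of the product minus the product of the
means. For `a = b` the divisions by zero make it `0`. -/
noncomputable def cebysevFunctional (f g : ℝ → ℝ) (a b : ℝ) : ℝ :=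
  (1 / (b - a)) * (∫ x in a..b, f x * g x) -
    ((1 / (b - a)) * ∫ x in a..b, f x) * ((1 / (b - a)) * ∫ x in a..b, g x)

variable {a b : ℝ} {f g : ℝ → ℝ}

theorem cebysevFunctional_congr {f₁ f₂ g₁ g₂ : ℝ → ℝ}
    (hf : EqOn f₁ f₂ (uIcc a b)) (hg : EqOn g₁ g₂ (uIcc a b)) :
    cebysevFunctional f₁ g₁ a b = cebysevFunctional f₂ g₂ a b := by
  have mul_congr : EqOn (fun x ↦ f₁ x * g₁ x) (fun x ↦ f₂ x * g₂ x) (uIcc a b) :=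
    fun x hx ↦ congrArg₂ (· * ·) (hf hx) (hg hx)
  rw [cebysevFunctional, integral_congr mul_congr, integral_congr hf, integral_congr hg,
    cebysevFunctional]

theorem cebysevFunctional_eq_covariance (hab : a < b)
    (hf : MemLp f 2 volume[|Icc a b]) (hg : MemLp g 2 volume[|Icc a b]) :
    cebysevFunctional f g a b = cov[f, g; volume[|Icc a b]] := by
  have := isProbabilityMeasure_cond_Icc hab
  simp only [covariance_eq_sub hf hg, integral_cond_Icc hab.le, Pi.mul_apply, smul_eq_mul,
    cebysevFunctional]

theorem abs_cebysevFunctional_le_of_lipschitzOnWith (hab : a < b) {K L : ℝ≥0}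
    (hf : LipschitzOnWith K f (Icc a b)) (hg : LipschitzOnWith L g (Icc a b)) :
    |cebysevFunctional f g a b| ≤ (1 / 12) * (b - a) ^ 2 * K * L := by
  have := isProbabilityMeasure_cond_Icc hab
  obtain ⟨F, hF, hfF⟩ := hf.extend_real
  obtain ⟨G, hG, hgG⟩ := hg.extend_real
  rw [← uIcc_of_le hab.le] at hfF hgG
  have id_memLp : MemLp id 2 volume[|Icc a b] := memLp_id_cond_Icc 2
  have F_memLp : MemLp F 2 volume[|Icc a b] := memLp_comp_of_lipschitzWith hF id_memLp
  have G_memLp : MemLp G 2 volume[|Icc a b] := memLp_comp_of_lipschitzWith hG id_memLp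
  calc |cebysevFunctional f g a b| = |cov[F, G; volume[|Icc a b]]| := by
        rw [cebysevFunctional_congr hfF hgG, cebysevFunctional_eq_covariance hab F_memLp G_memLp]
    _ ≤ K * L * Var[id; volume[|Icc a b]] :=
        abs_covariance_comp_comp_le_of_lipschitzWith hF hG id_memLp
    _ = (1 / 12) * (b - a) ^ 2 * K * L := by
        rw [variance_id_cond_Icc hab]
        ring

end CebysevFunctional

section EssentiallyBoundedDerivative

theorem essSup_nonneg_of_ae_nonneg {α : Type*} {mα : MeasurableSpace α} {μ : Measure α}
    {p : α → ℝ} (hp : 0 ≤ᵐ[μ] p) : 0 ≤ essSup p μ := by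
  rcases eq_zero_or_neZero μ with rfl | _
  · simp [essSup, Filter.limsup_eq]
  · rw [essSup, Filter.limsup_eq]
    refine Real.sInf_nonneg fun C hC ↦ ?_
    obtain ⟨t, ht, htC⟩ := (hp.and hC).exists
    exact ht.trans htC

variable {E : Type*} [NormedAddCommGroup E] [NormedSpace ℝ E] {a b : ℝ} {f f' : ℝ → E} {c : E}

theorem lipschitzOnWith_of_eq_add_integral {K : ℝ≥0}
    (hf : ∀ x ∈ Icc a b, f x = c + ∫ t in a..x, f' t)
    (hf' : IntervalIntegrable f' volume a b)
    (hK : ∀ᵐ t ∂volume.restrict (Icc a b), ‖f' t‖ ≤ K) :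
    LipschitzOnWith K f (Icc a b) := by
  refine .of_dist_le_mul fun x hx y hy ↦ ?_
  have integrable_to {z : ℝ} (hz : z ∈ Icc a b) : IntervalIntegrable f' volume a z :=
    hf'.mono_set <| uIcc_subset_uIcc_left <| Icc_subset_uIcc hz
  have sub_eq : f x - f y = ∫ t in y..x, f' t := by
    rw [hf x hx, hf y hy, add_sub_add_left_eq_sub,
      integral_interval_sub_left (integrable_to hx) (integrable_to hy)]
  rw [dist_eq_norm, sub_eq, Real.dist_eq]
  refine norm_integral_le_of_norm_le_const_ae ?_
  filter_upwards [(ae_restrict_iff' measurableSet_Icc).1 hK] with t ht hmem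
  exact ht (uIcc_subset_Icc hy hx (uIoc_subset_uIcc hmem))

theorem lipschitzOnWith_essSup_of_eq_add_integral
    (hf : ∀ x ∈ Icc a b, f x = c + ∫ t in a..x, f' t)
    (hf' : IntervalIntegrable f' volume a b)
    (hbdd : ∃ C, ∀ᵐ t ∂volume.restrict (Icc a b), ‖f' t‖ ≤ C) :
    LipschitzOnWith (essSup (fun t ↦ ‖f' t‖) (volume.restrict (Icc a b))).toNNReal f
      (Icc a b) := by
  refine lipschitzOnWith_of_eq_add_integral hf hf' ?_
  filter_upwards [ae_le_essSup hbdd] with t ht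
  exact ht.trans (Real.le_coe_toNNReal _)

end EssentiallyBoundedDerivative

/-- **Čebyšev's inequality.** If `f, g` are absolutely continuous on `[a,b]`
(i.e. they are integrals of their derivatives `f'`, `g'`), with `f'`, `g'`
essentially bounded, then `|T(f,g)| ≤ (1/12)(b−a)² ‖f'‖_∞ ‖g'‖_∞`, where
`‖p‖_∞` is the essential supremum of `|p|` over `[a,b]`. -/
theorem cebysev_inequality (a b : ℝ) (hab : a < b) (f g f' g' : ℝ → ℝ)
    (hf : ∀ x ∈ Icc a b, f x = f a + ∫ t in a..x, f' t)
    (hg : ∀ x ∈ Icc a b, g x = g a + ∫ t in a..x, g' t)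
    (hf'int : IntervalIntegrable f' volume a b)
    (hg'int : IntervalIntegrable g' volume a b)
    (hf'bdd : ∃ C, ∀ᵐ t ∂(volume.restrict (Icc a b)), |f' t| ≤ C)
    (hg'bdd : ∃ C, ∀ᵐ t ∂(volume.restrict (Icc a b)), |g' t| ≤ C) :
    |(1 / (b - a)) * (∫ x in a..b, f x * g x) -
        ((1 / (b - a)) * ∫ x in a..b, f x) * ((1 / (b - a)) * ∫ x in a..b, g x)| ≤
      (1 / 12) * (b - a) ^ 2 *
        essSup (fun t => |f' t|) (volume.restrict (Icc a b)) *
        essSup (fun t => |g' t|) (volume.restrict (Icc a b)) := by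
  have coe_essSup (p : ℝ → ℝ) :
      ((essSup (fun t ↦ |p t|) (volume.restrict (Icc a b))).toNNReal : ℝ) =
        essSup (fun t ↦ |p t|) (volume.restrict (Icc a b)) :=
    Real.coe_toNNReal _ (essSup_nonneg_of_ae_nonneg (.of_forall fun t ↦ abs_nonneg (p t)))
  have f_lipschitz := lipschitzOnWith_essSup_of_eq_add_integral hf hf'int hf'bdd
  have g_lipschitz := lipschitzOnWith_essSup_of_eq_add_integral hg hg'int hg'bdd
  simpa only [Real.norm_eq_abs, coe_essSup, cebysevFunctional] using
    abs_cebysevFunctional_le_of_lipschitzOnWith hab f_lipschitz g_lipschitz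
end

section
/- Let f : [a,b] → ℝ be differentiable on [a,b] with f′ integrable on [a,b]. Then for every x ∈ [a,b], f(x) = (1/(b−a)) ∫_a^b f(t) dt + ∫_a^b P₁(x,t) f′(t) dt, where P₁(x,t) = (t−a)/(b−a) for a ≤ t < x and P₁(x,t) = (t−b)/(b−a) for x ≤ t ≤ b. -/
open MeasureTheory Set intervalIntegral

/-!
Integrate `(t - a) f'(t)` by parts on `[a, x]` and `(t - b) f'(t)` on `[x, b]`. The two weights
vanish at the outer endpoints, so only the boundary terms at `x` survive; their coefficients
`x - a` and `b - x` add up to `b - a`.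
-/

/-- The Peano kernel `P₁(x, t)` of the interval `[a, b]`, which represents the deviation of `f x`
from the mean of `f` as an integral against the derivative of `f`. It is meant for `a < b`
and `t ∈ [a, b]`; for `t` outside, the two affine branches are simply continued. -/
noncomputable def peanoKernel (a b x t : ℝ) : ℝ :=
  if t < x then (t - a) / (b - a) else (t - b) / (b - a)

theorem uIoo_subset_uIoo {α : Type*} [LinearOrder α] {a₁ b₁ a₂ b₂ : α} (ha : a₁ ∈ uIcc a₂ b₂)
    (hb : b₁ ∈ uIcc a₂ b₂) : uIoo a₁ b₁ ⊆ uIoo a₂ b₂ :=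
  Ioo_subset_Ioo (le_inf ha.1 hb.1) (sup_le ha.2 hb.2)

section

variable {E : Type*} [NormedAddCommGroup E] [NormedSpace ℝ E] {a b x : ℝ} {f f' g h : ℝ → E}

theorem integral_ite_lt {μ : Measure ℝ} [NullSingletonClass μ] (hx : x ∈ Icc a b)
    (hg : IntervalIntegrable g μ a x) (hh : IntervalIntegrable h μ x b) :
    ∫ t in a..b, (if t < x then g t else h t) ∂μ = (∫ t in a..x, g t ∂μ) + ∫ t in x..b, h t ∂μ := by
  have left : EqOn g (fun t ↦ if t < x then g t else h t) (uIoo a x) := fun t ht ↦ by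
    rw [uIoo_of_le hx.1] at ht
    exact (if_pos ht.2).symm
  have right : EqOn h (fun t ↦ if t < x then g t else h t) (uIoo x b) := fun t ht ↦ by
    rw [uIoo_of_le hx.2] at ht
    exact (if_neg ht.1.not_gt).symm
  rw [← integral_add_adjacent_intervals (hg.congr_uIoo left) (hh.congr_uIoo right),
    integral_congr_uIoo left, integral_congr_uIoo right]

theorem integral_peanoKernel_smul (hx : x ∈ Icc a b) (hg : IntervalIntegrable g volume a b) :
    ∫ t in a..b, peanoKernel a b x t • g t =
      (b - a)⁻¹ • ((∫ t in a..x, (t - a) • g t) + ∫ t in x..b, (t - b) • g t) := by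
  have hx' : x ∈ uIcc a b := Icc_subset_uIcc hx
  have left : IntervalIntegrable (fun t ↦ (t - a) • g t) volume a x :=
    (hg.mono_set (uIcc_subset_uIcc_left hx')).continuousOn_smul (by fun_prop)
  have right : IntervalIntegrable (fun t ↦ (t - b) • g t) volume x b :=
    (hg.mono_set (uIcc_subset_uIcc_right hx')).continuousOn_smul (by fun_prop)
  rw [← integral_ite_lt hx left right, ← intervalIntegral.integral_smul]
  congr with t
  simp only [peanoKernel, div_eq_inv_mul, ite_smul, smul_ite, mul_smul]

variable [CompleteSpace E]

theorem integral_sub_const_smul_deriv_of_hasDeriv_right (c : ℝ) (hf : ContinuousOn f (uIcc a b))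
    (hff' : ∀ t ∈ uIoo a b, HasDerivWithinAt f (f' t) (Ioi t) t)
    (hf' : IntervalIntegrable f' volume a b) :
    ∫ t in a..b, (t - c) • f' t = (b - c) • f b - (a - c) • f a - ∫ t in a..b, f t := by
  simpa only [one_smul] using
    integral_smul_deriv_eq_deriv_smul_of_hasDeriv_right (u := fun t ↦ t - c) (u' := fun _ ↦ 1)
      (by fun_prop) hf (fun t _ ↦ ((hasDerivAt_id t).sub_const c).hasDerivWithinAt) hff'
      intervalIntegrable_const hf'

theorem integral_sub_smul_deriv_add_integral_sub_smul_deriv (hx : x ∈ uIcc a b)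
    (hf : ContinuousOn f (uIcc a b))
    (hff' : ∀ t ∈ uIoo a b, HasDerivWithinAt f (f' t) (Ioi t) t)
    (hf' : IntervalIntegrable f' volume a b) :
    (∫ t in a..x, (t - a) • f' t) + ∫ t in x..b, (t - b) • f' t =
      (b - a) • f x - ∫ t in a..b, f t := by
  have hfl := hf.mono (uIcc_subset_uIcc_left hx)
  have hfr := hf.mono (uIcc_subset_uIcc_right hx)
  have left : ∫ t in a..x, (t - a) • f' t = (x - a) • f x - ∫ t in a..x, f t := by
    simpa only [sub_self, zero_smul, sub_zero] using
      integral_sub_const_smul_deriv_of_hasDeriv_right a hfl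
        (fun t ht ↦ hff' t (uIoo_subset_uIoo left_mem_uIcc hx ht))
        (hf'.mono_set (uIcc_subset_uIcc_left hx))
  have right : ∫ t in x..b, (t - b) • f' t = (b - x) • f x - ∫ t in x..b, f t := by
    simpa only [sub_self, zero_smul, zero_sub, ← neg_smul, neg_sub] using
      integral_sub_const_smul_deriv_of_hasDeriv_right b hfr
        (fun t ht ↦ hff' t (uIoo_subset_uIoo hx right_mem_uIcc ht))
        (hf'.mono_set (uIcc_subset_uIcc_right hx))
  rw [left, right,
    ← integral_add_adjacent_intervals hfl.intervalIntegrable hfr.intervalIntegrable]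
  module

theorem montgomery_identity_general (hab : a < b) (hf : ContinuousOn f (Icc a b))
    (hff' : ∀ t ∈ Ioo a b, HasDerivWithinAt f (f' t) (Ioi t) t)
    (hf' : IntervalIntegrable f' volume a b) (hx : x ∈ Icc a b) :
    f x = (b - a)⁻¹ • (∫ t in a..b, f t) + ∫ t in a..b, peanoKernel a b x t • f' t := by
  rw [← uIcc_of_le hab.le] at hf
  rw [← uIoo_of_le hab.le] at hff'
  rw [integral_peanoKernel_smul hx hf',
    integral_sub_smul_deriv_add_integral_sub_smul_deriv (Icc_subset_uIcc hx) hf hff' hf',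
    ← smul_add, add_sub_cancel, inv_smul_smul₀ (sub_pos.2 hab).ne']

end

/-- **Montgomery identity.** If `f` is differentiable on `[a,b]` with derivative `f'`
integrable on `[a,b]`, then for every `x ∈ [a,b]`,
`f(x) = (1/(b−a)) ∫_a^b f(t) dt + ∫_a^b P₁(x,t) f'(t) dt`, where
`P₁(x,t) = (t−a)/(b−a)` for `t < x` and `P₁(x,t) = (t−b)/(b−a)` for `x ≤ t`. -/
theorem montgomery_identity (a b : ℝ) (hab : a < b) (f f' : ℝ → ℝ)
    (hderiv : ∀ x ∈ Icc a b, HasDerivAt f (f' x) x)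
    (hint : IntervalIntegrable f' volume a b) :
    ∀ x ∈ Icc a b,
      f x = (1 / (b - a)) * (∫ t in a..b, f t) +
        ∫ t in a..b, (if t < x then (t - a) / (b - a) else (t - b) / (b - a)) * f' t := by
  intro x hx
  simpa only [one_div, smul_eq_mul, peanoKernel] using
    montgomery_identity_general hab (HasDerivAt.continuousOn hderiv)
      (fun t ht ↦ (hderiv t (Ioo_subset_Icc_self ht)).hasDerivWithinAt) hint hx
end

section
/- Let I ⊂ ℝ be an open interval, a, b ∈ I with a < b, and let f : I → ℝ be a differentiable function such that there exist constants φ, Φ ∈ ℝ with φ ≤ f′(x) ≤ Φ for all x ∈ [a,b]. Then for all x ∈ [a,b], |f(x) − ((f(b) − f(a))/(b−a))(x − (a+b)/2) − (1/(b−a)) ∫_a^b f(t) dt| ≤ (1/4)(b−a)(Φ − φ). -/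
open MeasureTheory Set intervalIntegral

/-!
The quantity to be estimated is unchanged when a linear function is subtracted from `f`, and
subtracting the one of slope `(φ + Φ) / 2` leaves a function that is Lipschitz with constant
`K = (Φ - φ) / 2`. For a `K`-Lipschitz `f` and `x` in the left half of `[a, b]`, put
`m = x + (b - a) / 2`. Up to the factor `b - a`, the quantity is a combination of
`f x - f a` and of the integrals of `f x - f t` over `[a, m]` and of `f b - f t` over `[m, b]`, and
the Lipschitz bounds for these add up to `K * (b - a) ^ 2 / 4`, whatever `x` is. The right half
follows by reflection. The resulting constant is `1 / 8`.
-/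

section Vector

open scoped NNReal Interval

variable {E : Type*} [NormedAddCommGroup E] [NormedSpace ℝ E]
  {f : ℝ → E} {a b x : ℝ} {K : ℝ≥0}

/-- The error, at the point `x`, in approximating `f` on `[a, b]` by its mean value plus the
linear correction `(x - (a + b) / 2) • (f b - f a) / (b - a)`. It is scaled by the length `b - a`
so that no division is needed and the case `a = b` is harmless. -/
noncomputable def ostrowskiGrussError (f : ℝ → E) (a b x : ℝ) : E :=
  (b - a) • f x - (x - (a + b) / 2) • (f b - f a) - ∫ t in a..b, f t

lemma ostrowskiGrussError_comp_reflection :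
    ostrowskiGrussError (fun t ↦ f (a + b - t)) a b (a + b - x) = ostrowskiGrussError f a b x := by
  simp only [ostrowskiGrussError, integral_comp_sub_left, sub_sub_cancel, add_sub_cancel_left,
    add_sub_cancel_right]
  module

lemma norm_integral_sub_left_le_of_lipschitzOnWith (hf : LipschitzOnWith K f (uIcc a b)) :
    ‖∫ t in a..b, (f t - f a)‖ ≤ K * (b - a) ^ 2 / 2 := by
  have hpointwise : ∀ t ∈ Ι a b, ‖f t - f a‖ ≤ K * |t - a| := fun t ht ↦
    hf.norm_sub_le (uIoc_subset_uIcc ht) left_mem_uIcc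
  have hnorm : IntegrableOn (fun t ↦ ‖f t - f a‖) (Ι a b) :=
    (hf.continuousOn.sub continuousOn_const).norm.intervalIntegrable.def'
  have hbound : IntegrableOn (fun t ↦ K * |t - a|) (Ι a b) :=
    (Continuous.intervalIntegrable (by fun_prop) a b).def'
  calc ‖∫ t in a..b, (f t - f a)‖
      ≤ ∫ t in Ι a b, ‖f t - f a‖ := norm_integral_le_integral_norm_uIoc
    _ ≤ ∫ t in Ι a b, K * |t - a| :=
        setIntegral_mono_on hnorm hbound measurableSet_uIoc hpointwise
    _ = K * (b - a) ^ 2 / 2 := by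
        have hdist : ∫ t in Ι a b, |t - a| = (b - a) ^ 2 / 2 := by
          simpa [one_add_one_eq_two] using integral_pow_abs_sub_uIoc (a := a) (b := b) 1
        rw [MeasureTheory.integral_const_mul, hdist, mul_div_assoc]

variable [CompleteSpace E]

lemma ostrowskiGrussError_sub_smul (hf : IntervalIntegrable f volume a b) (c : E) :
    ostrowskiGrussError (fun t ↦ f t - t • c) a b x = ostrowskiGrussError f a b x := by
  have hc : IntervalIntegrable (fun t : ℝ ↦ t • c) volume a b :=
    Continuous.intervalIntegrable (by fun_prop) a b
  simp only [ostrowskiGrussError]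
  rw [intervalIntegral.integral_sub hf hc, intervalIntegral.integral_smul_const, integral_id]
  module

/-- Integration by parts against the Peano kernel, which on `[x, b]` vanishes at
`x + (b - a) / 2`, with `f'` eliminated. -/
lemma ostrowskiGrussError_eq_integral_increments (hf : ContinuousOn f (Icc a b))
    (hx : x ∈ Icc a ((a + b) / 2)) :
    ostrowskiGrussError f a b x =
      (∫ t in x..a, (f t - f x)) - (∫ t in x..(x + (b - a) / 2), (f t - f x)) +
        (∫ t in b..(x + (b - a) / 2), (f t - f b)) + ((a + b) / 2 - x) • (f x - f a) := by
  obtain ⟨hax, hxm⟩ := hx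
  have hint {u v : ℝ} (hu : u ∈ Icc a b) (hv : v ∈ Icc a b) : IntervalIntegrable f volume u v :=
    (hf.mono (ordConnected_Icc.uIcc_subset hu hv)).intervalIntegrable
  have hint_sub {u v : ℝ} (hu : u ∈ Icc a b) (hv : v ∈ Icc a b) :
      ∫ t in u..v, (f t - f u) = (∫ t in u..v, f t) - (v - u) • f u := by
    rw [intervalIntegral.integral_sub (hint hu hv) intervalIntegrable_const,
      intervalIntegral.integral_const]
  have ha : a ∈ Icc a b := ⟨le_rfl, by linarith⟩
  have hb : b ∈ Icc a b := ⟨by linarith, le_rfl⟩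
  have hx : x ∈ Icc a b := ⟨hax, by linarith⟩
  have hm : x + (b - a) / 2 ∈ Icc a b := ⟨by linarith, by linarith⟩
  rw [ostrowskiGrussError, hint_sub hx ha, hint_sub hx hm, hint_sub hb hm,
    ← integral_add_adjacent_intervals (hint ha hx) (hint hx hb),
    ← integral_add_adjacent_intervals (hint hx hm) (hint hm hb), integral_symm a x,
    integral_symm (x + (b - a) / 2) b]
  module

lemma norm_ostrowskiGrussError_le_of_mem_left_half (hf : LipschitzOnWith K f (Icc a b))
    (hx : x ∈ Icc a ((a + b) / 2)) :
    ‖ostrowskiGrussError f a b x‖ ≤ K * (b - a) ^ 2 / 4 := by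
  have hax : a ≤ x := hx.1
  have hxm : x ≤ (a + b) / 2 := hx.2
  have hincr {u v : ℝ} (hu : u ∈ Icc a b) (hv : v ∈ Icc a b) :
      ‖∫ t in u..v, (f t - f u)‖ ≤ K * (v - u) ^ 2 / 2 :=
    norm_integral_sub_left_le_of_lipschitzOnWith (hf.mono (ordConnected_Icc.uIcc_subset hu hv))
  have ha : a ∈ Icc a b := ⟨le_rfl, by linarith⟩
  have hb : b ∈ Icc a b := ⟨by linarith, le_rfl⟩
  have hx' : x ∈ Icc a b := ⟨hax, by linarith⟩
  have hm : x + (b - a) / 2 ∈ Icc a b := ⟨by linarith, by linarith⟩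
  have hjump : ‖((a + b) / 2 - x) • (f x - f a)‖ ≤ ((a + b) / 2 - x) * (K * (x - a)) := by
    rw [norm_smul, Real.norm_of_nonneg (sub_nonneg.2 hxm)]
    gcongr
    simpa [abs_of_nonneg (sub_nonneg.2 hax)] using hf.norm_sub_le hx' ha
  rw [ostrowskiGrussError_eq_integral_increments hf.continuousOn hx]
  calc _ ≤ K * (a - x) ^ 2 / 2 + K * (x + (b - a) / 2 - x) ^ 2 / 2 +
        K * (x + (b - a) / 2 - b) ^ 2 / 2 + ((a + b) / 2 - x) * (K * (x - a)) :=
        norm_add_le_of_le (norm_add_le_of_le (norm_sub_le_of_le (hincr hx' ha) (hincr hx' hm))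
          (hincr hb hm)) hjump
    _ = K * (b - a) ^ 2 / 4 := by ring

lemma norm_ostrowskiGrussError_le (hf : LipschitzOnWith K f (Icc a b)) (hx : x ∈ Icc a b) :
    ‖ostrowskiGrussError f a b x‖ ≤ K * (b - a) ^ 2 / 4 := by
  rcases le_total x ((a + b) / 2) with hleft | hright
  · exact norm_ostrowskiGrussError_le_of_mem_left_half hf ⟨hx.1, hleft⟩
  · have hreflect : LipschitzOnWith K (fun t ↦ f (a + b - t)) (Icc a b) := by
      have hmaps : MapsTo (fun t ↦ a + b - t) (Icc a b) (Icc a b) := fun t ht ↦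
        ⟨by linarith [ht.2], by linarith [ht.1]⟩
      simpa [Function.comp_def] using
        hf.comp (IsometryEquiv.subLeft (a + b)).isometry.lipschitz.lipschitzOnWith hmaps
    rw [← ostrowskiGrussError_comp_reflection]
    exact norm_ostrowskiGrussError_le_of_mem_left_half hreflect
      ⟨by linarith [hx.2], by linarith⟩

end Vector

section Real

variable {f f' : ℝ → ℝ} {a b φ Φ x : ℝ} {s : Set ℝ}

lemma sub_mem_Icc_of_hasDerivWithinAt_mem_Icc (hs : Convex ℝ s)
    (hderiv : ∀ t ∈ s, HasDerivWithinAt f (f' t) s t) (hbound : ∀ t ∈ s, f' t ∈ Icc φ Φ) :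
    ∀ u ∈ s, ∀ v ∈ s, u ≤ v → f v - f u ∈ Icc (φ * (v - u)) (Φ * (v - u)) := by
  have hcont : ContinuousOn f s := fun t ht ↦ (hderiv t ht).continuousWithinAt
  have hderivAt : ∀ t ∈ interior s, HasDerivAt f (f' t) t := fun t ht ↦
    (hderiv t (interior_subset ht)).hasDerivAt (mem_interior_iff_mem_nhds.1 ht)
  have hdiff : DifferentiableOn ℝ f (interior s) := fun t ht ↦
    (hderivAt t ht).differentiableAt.differentiableWithinAt
  have hderiv_mem : ∀ t ∈ interior s, deriv f t ∈ Icc φ Φ := fun t ht ↦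
    (hderivAt t ht).deriv ▸ hbound t (interior_subset ht)
  exact fun u hu v hv huv ↦
    ⟨hs.mul_sub_le_image_sub_of_le_deriv hcont hdiff (fun t ht ↦ (hderiv_mem t ht).1)
      u hu v hv huv,
    hs.image_sub_le_mul_sub_of_deriv_le hcont hdiff (fun t ht ↦ (hderiv_mem t ht).2)
      u hu v hv huv⟩

lemma lipschitzOnWith_sub_smul_midpoint_of_sub_mem_Icc
    (hf : ∀ u ∈ s, ∀ v ∈ s, u ≤ v → f v - f u ∈ Icc (φ * (v - u)) (Φ * (v - u))) :
    LipschitzOnWith ((Φ - φ) / 2).toNNReal (fun t ↦ f t - t • ((φ + Φ) / 2)) s := by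
  refine LipschitzOnWith.of_le_add_mul' _ fun u hu v hv ↦ ?_
  rw [Real.dist_eq, smul_eq_mul, smul_eq_mul]
  rcases le_total u v with huv | hvu
  · rw [abs_of_nonpos (sub_nonpos.2 huv)]
    linarith [(hf u hu v hv huv).1]
  · rw [abs_of_nonneg (sub_nonneg.2 hvu)]
    linarith [(hf v hv u hu hvu).2]

lemma abs_ostrowskiGrussError_le
    (hf : ∀ u ∈ Icc a b, ∀ v ∈ Icc a b, u ≤ v → f v - f u ∈ Icc (φ * (v - u)) (Φ * (v - u)))
    (hslope : φ ≤ Φ) (hx : x ∈ Icc a b) :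
    |ostrowskiGrussError f a b x| ≤ (Φ - φ) * (b - a) ^ 2 / 8 := by
  have hlip := lipschitzOnWith_sub_smul_midpoint_of_sub_mem_Icc hf
  have hcont : ContinuousOn f (Icc a b) := by
    have hlinear : ContinuousOn (fun t : ℝ ↦ t • ((φ + Φ) / 2)) (Icc a b) := by fun_prop
    exact (hlip.continuousOn.add hlinear).congr fun t _ ↦ (sub_add_cancel _ _).symm
  have hint : IntervalIntegrable f volume a b :=
    hcont.intervalIntegrable_of_Icc (hx.1.trans hx.2)
  rw [← Real.norm_eq_abs, ← ostrowskiGrussError_sub_smul hint]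
  refine (norm_ostrowskiGrussError_le hlip hx).trans_eq ?_
  rw [Real.coe_toNNReal _ (by linarith)]
  ring

theorem cheng_ostrowski_gruss_general (hab : a < b)
    (hf : ∀ u ∈ Icc a b, ∀ v ∈ Icc a b, u ≤ v → f v - f u ∈ Icc (φ * (v - u)) (Φ * (v - u)))
    (hx : x ∈ Icc a b) :
    |f x - ((f b - f a) / (b - a)) * (x - (a + b) / 2) - (1 / (b - a)) * ∫ t in a..b, f t| ≤
      (1 / 8) * (b - a) * (Φ - φ) := by
  have hlen : 0 < b - a := sub_pos.2 hab
  have hslope : φ ≤ Φ := by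
    obtain ⟨hlo, hhi⟩ := hf a (left_mem_Icc.2 hab.le) b (right_mem_Icc.2 hab.le) hab.le
    exact le_of_mul_le_mul_right (hlo.trans hhi) hlen
  have herror : f x - ((f b - f a) / (b - a)) * (x - (a + b) / 2) -
      (1 / (b - a)) * ∫ t in a..b, f t = ostrowskiGrussError f a b x / (b - a) := by
    simp only [ostrowskiGrussError, smul_eq_mul]
    field_simp
  rw [herror, abs_div, abs_of_pos hlen, div_le_iff₀ hlen]
  exact (abs_ostrowskiGrussError_le hf hslope hx).trans_eq (by ring)

end Real

/-- **Cheng's Ostrowski–Grüss type inequality.** Let `I` be an open interval,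
`a, b ∈ I` with `a < b`, and `f : ℝ → ℝ` differentiable on `I` with derivative `f'`
satisfying `φ ≤ f' ≤ Φ` on `[a,b]`.  Then for all `x ∈ [a,b]`,
`|f(x) − ((f(b)−f(a))/(b−a))(x − (a+b)/2) − (1/(b−a))∫_a^b f| ≤ (1/4)(b−a)(Φ−φ)`. -/
theorem cheng_ostrowski_gruss (I : Set ℝ) (hIopen : IsOpen I) (hIconn : I.OrdConnected)
    (a b : ℝ) (ha : a ∈ I) (hb : b ∈ I) (hab : a < b)
    (f f' : ℝ → ℝ) (hderiv : ∀ x ∈ I, HasDerivAt f (f' x) x)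
    (φ Φ : ℝ) (hbound : ∀ x ∈ Icc a b, φ ≤ f' x ∧ f' x ≤ Φ) :
    ∀ x ∈ Icc a b,
      |f x - ((f b - f a) / (b - a)) * (x - (a + b) / 2) -
          (1 / (b - a)) * ∫ t in a..b, f t| ≤
        (1 / 4) * (b - a) * (Φ - φ) := by
  intro x hx
  have hincr := sub_mem_Icc_of_hasDerivWithinAt_mem_Icc (convex_Icc a b)
    (fun t ht ↦ (hderiv t (hIconn.out ha hb ht)).hasDerivWithinAt) hbound
  have hslope : φ ≤ Φ := (hbound x hx).1.trans (hbound x hx).2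
  linarith [cheng_ostrowski_gruss_general hab hincr hx,
    mul_nonneg (sub_nonneg.2 hab.le) (sub_nonneg.2 hslope)]
end

section
/- Let f : [a,b] → ℝ be an absolutely continuous mapping whose derivative f′ belongs to L₂[a,b], and suppose φ ≤ f′(t) ≤ Φ for almost every t ∈ [a,b]. Then ((1/(b−a)) ‖f′‖₂² − ((f(b) − f(a))/(b−a))²)^{1/2} ≤ (Φ − φ)/2, and consequently ((b−a)/(2√3)) · ((1/(b−a)) ‖f′‖₂² − ((f(b) − f(a))/(b−a))²)^{1/2} ≤ (b−a)(Φ − φ)/(4√3). -/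
open MeasureTheory Set intervalIntegral

/-!
Under the normalized Lebesgue measure on `[a, b]` the mean of `f'` is `(f b - f a) / (b - a)`, so
the quantity under the square root is the variance of `f'`. Popoviciu's inequality bounds the
variance of a random variable with values in `[φ, Φ]` by `((Φ - φ) / 2) ^ 2`.
-/

section Average

variable {Ω : Type*} [MeasurableSpace Ω] {μ : Measure Ω} [IsFiniteMeasure μ] [NeZero μ]
  {X : Ω → ℝ} {φ Φ : ℝ}

theorem average_sq_sub_sq_average_le (hX : AEMeasurable X μ) (hbound : ∀ᵐ ω ∂μ, X ω ∈ Icc φ Φ) :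
    (⨍ ω, X ω ^ 2 ∂μ) - (⨍ ω, X ω ∂μ) ^ 2 ≤ ((Φ - φ) / 2) ^ 2 := by
  have hX' : AEMeasurable X ((μ univ)⁻¹ • μ) := hX.smul_measure _
  have hbound' : ∀ᵐ ω ∂((μ univ)⁻¹ • μ), X ω ∈ Icc φ Φ := Measure.ae_smul_measure hbound _
  have hL2 : MemLp X 2 ((μ univ)⁻¹ • μ) := memLp_of_bounded hbound' hX'.aestronglyMeasurable 2
  calc (⨍ ω, X ω ^ 2 ∂μ) - (⨍ ω, X ω ∂μ) ^ 2
      = ProbabilityTheory.variance X ((μ univ)⁻¹ • μ) :=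
        (ProbabilityTheory.variance_eq_sub hL2).symm
    _ ≤ ((Φ - φ) / 2) ^ 2 := ProbabilityTheory.variance_le_sq_of_bounded hbound' hX'

theorem sqrt_average_sq_sub_sq_average_le (hX : AEMeasurable X μ)
    (hbound : ∀ᵐ ω ∂μ, X ω ∈ Icc φ Φ) :
    √((⨍ ω, X ω ^ 2 ∂μ) - (⨍ ω, X ω ∂μ) ^ 2) ≤ (Φ - φ) / 2 := by
  obtain ⟨_, hφ, hΦ⟩ := hbound.exists
  exact Real.sqrt_le_iff.2 ⟨by linarith, average_sq_sub_sq_average_le hX hbound⟩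

end Average

theorem sqrt_interval_average_sq_sub_sq_le {a b φ Φ : ℝ} {g : ℝ → ℝ}
    (hab : a ≠ b) (hg : AEMeasurable g (volume.restrict (uIoc a b)))
    (hbound : ∀ᵐ t ∂(volume.restrict (uIoc a b)), g t ∈ Icc φ Φ) :
    √((⨍ t in a..b, g t ^ 2) - (⨍ t in a..b, g t) ^ 2) ≤ (Φ - φ) / 2 := by
  have : IsFiniteMeasure (volume.restrict (uIoc a b)) :=
    inferInstanceAs (IsFiniteMeasure (volume.restrict (Ioc (min a b) (max a b))))
  have : NeZero (volume.restrict (uIoc a b)) := ⟨by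
    rwa [Ne, Measure.restrict_eq_zero, Real.volume_uIoc, ENNReal.ofReal_eq_zero, abs_nonpos_iff,
      sub_eq_zero, eq_comm]⟩
  exact sqrt_average_sq_sub_sq_average_le hg hbound

/-- If `f` is absolutely continuous on `[a,b]` with `f' ∈ L₂[a,b]` and
`φ ≤ f' ≤ Φ` a.e. on `[a,b]`, then
`((1/(b−a))‖f'‖₂² − ((f(b)−f(a))/(b−a))²)^{1/2} ≤ (Φ−φ)/2`, and consequently
`((b−a)/(2√3)) ((1/(b−a))‖f'‖₂² − ((f(b)−f(a))/(b−a))²)^{1/2} ≤ (b−a)(Φ−φ)/(4√3)`. -/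
theorem L2_bound_by_gruss (a b φ Φ : ℝ) (hab : a < b) (f f' : ℝ → ℝ)
    (hf : ∀ x ∈ Icc a b, f x = f a + ∫ t in a..x, f' t)
    (hint : IntervalIntegrable f' volume a b)
    (hL2 : IntervalIntegrable (fun t => (f' t) ^ 2) volume a b)
    (hbound : ∀ᵐ t ∂(volume.restrict (Icc a b)), φ ≤ f' t ∧ f' t ≤ Φ) :
    Real.sqrt ((1 / (b - a)) * (∫ t in a..b, (f' t) ^ 2) -
        ((f b - f a) / (b - a)) ^ 2) ≤ (Φ - φ) / 2 ∧
    ((b - a) / (2 * Real.sqrt 3)) *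
        Real.sqrt ((1 / (b - a)) * (∫ t in a..b, (f' t) ^ 2) -
          ((f b - f a) / (b - a)) ^ 2) ≤
      (b - a) * (Φ - φ) / (4 * Real.sqrt 3) := by
  have hmean : (f b - f a) / (b - a) = ⨍ t in a..b, f' t := by
    rw [interval_average_eq_div, hf b (right_mem_Icc.2 hab.le), add_sub_cancel_left]
  have hmean_sq : 1 / (b - a) * (∫ t in a..b, f' t ^ 2) = ⨍ t in a..b, f' t ^ 2 := by
    rw [interval_average_eq_div, one_div_mul_eq_div]
  have hbound' : ∀ᵐ t ∂(volume.restrict (uIoc a b)), f' t ∈ Icc φ Φ :=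
    ae_restrict_of_ae_restrict_of_subset (uIoc_of_le hab.le ▸ Ioc_subset_Icc_self) hbound
  have hsqrt := sqrt_interval_average_sq_sub_sq_le hab.ne
    hint.aestronglyMeasurable_restrict_uIoc.aemeasurable hbound'
  rw [hmean, hmean_sq]
  refine ⟨hsqrt, ?_⟩
  calc (b - a) / (2 * √3) * √((⨍ t in a..b, f' t ^ 2) - (⨍ t in a..b, f' t) ^ 2)
      ≤ (b - a) / (2 * √3) * ((Φ - φ) / 2) :=
        mul_le_mul_of_nonneg_left hsqrt (div_nonneg (sub_nonneg.2 hab.le) (by positivity))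
    _ = (b - a) * (Φ - φ) / (4 * √3) := by ring
end

section
/- Let a < b, x ∈ [a,b] and α ≥ 1. Then J_a^α(P₂(x,·))(b) = ((b−x)^{1−α}(b−a)^α)/(α(α+1)) − (b−x)/α. -/
open MeasureTheory Set intervalIntegral

/-- The Riemann–Liouville fractional integral of order `α` with base point `a`:
`J_a^α f(x) = (1/Γ(α)) ∫_a^x (x−t)^{α−1} f(t) dt` for `α ≠ 0`, and `J_a^0 f = f`. -/
noncomputable def RL (a α : ℝ) (f : ℝ → ℝ) (x : ℝ) : ℝ :=
  if α = 0 then f x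
  else (1 / Real.Gamma α) * ∫ t in a..x, (x - t) ^ (α - 1) * f t

/-- The fractional Peano kernel:
`P₂(x,t) = ((t−a)/(b−a))(b−x)^{1−α}Γ(α)` for `t < x`, and
`P₂(x,t) = ((t−b)/(b−a))(b−x)^{1−α}Γ(α)` for `x ≤ t`. -/
noncomputable def P2 (a b α x t : ℝ) : ℝ :=
  if t < x then ((t - a) / (b - a)) * (b - x) ^ (1 - α) * Real.Gamma α
  else ((t - b) / (b - a)) * (b - x) ^ (1 - α) * Real.Gamma α

/-! The kernel is an affine function of `t` plus a jump at `x`: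
`P₂(x,t) = (b−x)^{1−α}Γ(α)(1_{t<x} − (b−t)/(b−a))`. By linearity it suffices to integrate the
indicator and the linear function against `(b−t)^{α−1}`, and both integrals are elementary. -/

theorem intervalIntegrable_mul_indicator_one {μ : Measure ℝ} {p q : ℝ} {f : ℝ → ℝ} {s : Set ℝ}
    (hs : MeasurableSet s) (hf : IntervalIntegrable f μ p q) :
    IntervalIntegrable (fun t => f t * s.indicator 1 t) μ p q := by
  have hind : (fun t => f t * s.indicator 1 t) = s.indicator f := by
    ext t
    rw [← indicator_mul_right s f, Pi.one_def]
    simp only [mul_one]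
  rw [hind]
  exact ⟨hf.1.indicator hs, hf.2.indicator hs⟩

section PowerIntegral

variable {p q c r : ℝ}

theorem intervalIntegrable_sub_left_rpow (hr : -1 < r) :
    IntervalIntegrable (fun t => (c - t) ^ r) volume p q := by
  have hpow : IntervalIntegrable (fun t => t ^ r) volume (c - p) (c - q) :=
    intervalIntegrable_rpow' hr
  simpa only [sub_sub_cancel] using hpow.comp_sub_left c

theorem integral_sub_left_rpow (hr : -1 < r) :
    ∫ t in p..q, (c - t) ^ r = ((c - p) ^ (r + 1) - (c - q) ^ (r + 1)) / (r + 1) := by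
  rw [integral_comp_sub_left (fun t => t ^ r) c, integral_rpow (Or.inl hr)]

end PowerIntegral

section FractionalIntegral

variable {a b x α β : ℝ} {f g : ℝ → ℝ}

theorem RL_of_ne_zero (hα : α ≠ 0) :
    RL a α f x = (1 / Real.Gamma α) * ∫ t in a..x, (x - t) ^ (α - 1) * f t :=
  if_neg hα

theorem RL_const_mul (c : ℝ) : RL a α (fun t => c * f t) x = c * RL a α f x := by
  simp only [RL, mul_left_comm _ c, intervalIntegral.integral_const_mul, mul_ite]

theorem RL_sub (hf : IntervalIntegrable (fun t => (x - t) ^ (α - 1) * f t) volume a x)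
    (hg : IntervalIntegrable (fun t => (x - t) ^ (α - 1) * g t) volume a x) :
    RL a α (fun t => f t - g t) x = RL a α f x - RL a α g x := by
  simp only [RL, mul_sub, intervalIntegral.integral_sub hf hg]
  split_ifs <;> rfl

theorem RL_indicator_Iio (hα : α ≠ 0) (hx : x ∈ Icc a b) :
    RL a α ((Iio x).indicator f) b =
      (1 / Real.Gamma α) * ∫ t in a..x, (b - t) ^ (α - 1) * f t := by
  have hIoo : Ioc a b ∩ Iio x = Ioo a x := by
    ext t
    exact ⟨fun h => ⟨h.1.1, h.2⟩, fun h => ⟨⟨h.1, h.2.le.trans hx.2⟩, h.2⟩⟩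
  simp_rw [RL_of_ne_zero hα, ← indicator_mul_right (Iio x) (fun t => (b - t) ^ (α - 1))]
  rw [integral_of_le (hx.1.trans hx.2), setIntegral_indicator measurableSet_Iio, hIoo,
    integral_of_le hx.1, integral_Ioc_eq_integral_Ioo]

theorem RL_indicator_Iio_one (hα : 0 < α) (hx : x ∈ Icc a b) :
    RL a α ((Iio x).indicator 1) b =
      ((b - a) ^ α - (b - x) ^ α) / (α * Real.Gamma α) := by
  simp only [RL_indicator_Iio hα.ne' hx, Pi.one_apply, mul_one,
    integral_sub_left_rpow (show -1 < α - 1 by linarith), sub_add_cancel,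
    div_mul_div_comm, one_mul, mul_comm α]

theorem RL_sub_left_rpow (hα : α ≠ 0) (hαβ : 0 < α + β) (hab : a ≤ b) :
    RL a α (fun t => (b - t) ^ β) b = (b - a) ^ (α + β) / ((α + β) * Real.Gamma α) := by
  have hint : ∫ t in a..b, (b - t) ^ (α - 1) * (b - t) ^ β =
      ∫ t in a..b, (b - t) ^ (α + β - 1) := by
    refine integral_congr_Ioo_of_le hab fun t ht => ?_
    simp only [← Real.rpow_add (sub_pos.mpr ht.2), sub_add_eq_add_sub]
  rw [RL_of_ne_zero hα, hint, integral_sub_left_rpow (by linarith), sub_add_cancel, sub_self,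
    Real.zero_rpow hαβ.ne', sub_zero, div_mul_div_comm, one_mul, mul_comm (Real.Gamma α)]

theorem RL_sub_left (hα : 0 < α) (hab : a ≤ b) :
    RL a α (fun t => b - t) b = (b - a) ^ (α + 1) / ((α + 1) * Real.Gamma α) := by
  simpa only [Real.rpow_one] using RL_sub_left_rpow (β := 1) hα.ne' (by linarith) hab

end FractionalIntegral

section PeanoKernel

variable {a b x α : ℝ}

theorem P2_eq_indicator_sub (hab : a ≠ b) (t : ℝ) :
    P2 a b α x t =
      (b - x) ^ (1 - α) * Real.Gamma α * ((Iio x).indicator 1 t - (b - a)⁻¹ * (b - t)) := by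
  have hba : b - a ≠ 0 := sub_ne_zero.mpr hab.symm
  by_cases ht : t < x
  · rw [P2, if_pos ht, indicator_of_mem (mem_Iio.mpr ht), Pi.one_apply]
    field_simp
    ring
  · rw [P2, if_neg ht, indicator_of_notMem (by simpa using ht)]
    field_simp
    ring

theorem RL_P2_eq_RL_indicator_sub (hab : a ≠ b) (hα : 0 < α) :
    RL a α (fun t => P2 a b α x t) b =
      (b - x) ^ (1 - α) * Real.Gamma α *
        (RL a α ((Iio x).indicator 1) b - (b - a)⁻¹ * RL a α (fun t => b - t) b) := by
  have hw : IntervalIntegrable (fun t => (b - t) ^ (α - 1)) volume a b :=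
    intervalIntegrable_sub_left_rpow (by linarith)
  have hlin : IntervalIntegrable
      (fun t => (b - t) ^ (α - 1) * ((b - a)⁻¹ * (b - t))) volume a b :=
    hw.mul_continuousOn (by fun_prop)
  simp only [P2_eq_indicator_sub hab]
  rw [RL_const_mul, RL_sub (intervalIntegrable_mul_indicator_one measurableSet_Iio hw) hlin,
    RL_const_mul]

theorem RL_P2_eval_general (hab : a < b) (hx : x ∈ Icc a b) (hα : 0 < α) :
    RL a α (fun t => P2 a b α x t) b =
      ((b - x) ^ (1 - α) * (b - a) ^ α) / (α * (α + 1)) - (b - x) / α := by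
  have hΓ : Real.Gamma α ≠ 0 := (Real.Gamma_pos_of_pos hα).ne'
  have hba : b - a ≠ 0 := (sub_pos.mpr hab).ne'
  calc RL a α (fun t => P2 a b α x t) b
    _ = (b - x) ^ (1 - α) * Real.Gamma α *
          (((b - a) ^ α - (b - x) ^ α) / (α * Real.Gamma α) -
            (b - a)⁻¹ * ((b - a) ^ (α + 1) / ((α + 1) * Real.Gamma α))) := by
      rw [RL_P2_eq_RL_indicator_sub hab.ne hα, RL_indicator_Iio_one hα hx, RL_sub_left hα hab.le]
    _ = (b - x) ^ (1 - α) * (b - a) ^ α / (α * (α + 1)) -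
          (b - x) ^ (1 - α) * (b - x) ^ α / α := by
      rw [Real.rpow_add_one hba]
      field_simp
      ring
    _ = (b - x) ^ (1 - α) * (b - a) ^ α / (α * (α + 1)) - (b - x) / α := by
      rw [← Real.rpow_add' (sub_nonneg.mpr hx.2) (by simp), sub_add_cancel, Real.rpow_one]

end PeanoKernel

/-- For `a < b`, `x ∈ [a,b]` and `α ≥ 1`, the fractional integral of the Peano kernel is
`J_a^α(P₂(x,·))(b) = ((b−x)^{1−α}(b−a)^α)/(α(α+1)) − (b−x)/α`. -/
theorem RL_P2_eval (a b x α : ℝ) (hab : a < b) (hx : x ∈ Icc a b) (hα : 1 ≤ α) :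
    RL a α (fun t => P2 a b α x t) b =
      ((b - x) ^ (1 - α) * (b - a) ^ α) / (α * (α + 1)) - (b - x) / α :=
  RL_P2_eval_general hab hx (zero_lt_one.trans_le hα)
end

section
/- Let f : [a,b] → ℝ be differentiable with f′ integrable on [a,b], and suppose φ ≤ f′(t) ≤ Φ for almost every t ∈ (a,b). Then 0 ≤ (1/(b−a)) ∫_a^b (f′(t))² dt − ((1/(b−a)) ∫_a^b f′(t) dt)² ≤ (1/4)(Φ − φ)². -/
open MeasureTheory Set intervalIntegral

open scoped ProbabilityTheory

section Average

variable {Ω : Type*} [MeasurableSpace Ω] {μ : Measure Ω} [IsFiniteMeasure μ] [NeZero μ] {g : Ω → ℝ}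

theorem average_sq_sub_sq_average_eq_variance (hg : MemLp g 2 μ) :
    ⨍ x, g x ^ 2 ∂μ - (⨍ x, g x ∂μ) ^ 2 = Var[g; (μ univ)⁻¹ • μ] :=
  -- `⨍ x, h x ∂μ` unfolds to the integral of `h` against the probability measure `(μ univ)⁻¹ • μ`
  (ProbabilityTheory.variance_eq_sub (hg.smul_measure
    (ENNReal.inv_ne_top.2 (NeZero.ne (μ univ))))).symm

theorem average_sq_sub_sq_average_mem_Icc {m M : ℝ} (hg : AEMeasurable g μ)
    (hbound : ∀ᵐ x ∂μ, g x ∈ Icc m M) :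
    ⨍ x, g x ^ 2 ∂μ - (⨍ x, g x ∂μ) ^ 2 ∈ Icc 0 (((M - m) / 2) ^ 2) := by
  rw [average_sq_sub_sq_average_eq_variance
    (memLp_of_bounded hbound hg.aestronglyMeasurable 2)]
  exact ⟨ProbabilityTheory.variance_nonneg _ _,
    ProbabilityTheory.variance_le_sq_of_bounded (Measure.ae_smul_measure hbound _)
      (hg.smul_measure _)⟩

end Average

theorem gruss_derivative_bound_general {a b φ Φ : ℝ} (hab : a < b) {g : ℝ → ℝ}
    (hg : AEMeasurable g (volume.restrict (Ioo a b)))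
    (hbound : ∀ᵐ t ∂(volume.restrict (Ioo a b)), φ ≤ g t ∧ g t ≤ Φ) :
    0 ≤ (1 / (b - a)) * (∫ t in a..b, (g t) ^ 2) -
        ((1 / (b - a)) * ∫ t in a..b, g t) ^ 2 ∧
      (1 / (b - a)) * (∫ t in a..b, (g t) ^ 2) -
        ((1 / (b - a)) * ∫ t in a..b, g t) ^ 2 ≤ (1 / 4) * (Φ - φ) ^ 2 := by
  have average_eq (h : ℝ → ℝ) :
      ⨍ t in Ioo a b, h t = (1 / (b - a)) * ∫ t in a..b, h t := by
    rw [restrict_Ioo_eq_restrict_Ioc, ← uIoc_of_le hab.le, interval_average_eq, one_div,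
      smul_eq_mul]
  have : NeZero (volume.restrict (Ioo a b)) := ⟨by simpa using hab⟩
  have hvar := average_sq_sub_sq_average_mem_Icc hg hbound
  have hconst : ((Φ - φ) / 2) ^ 2 = (1 / 4) * (Φ - φ) ^ 2 := by ring
  rwa [average_eq, average_eq, hconst] at hvar

/-- **Grüss bound for the derivative.** If `f` is differentiable with `f'` integrable on
`[a,b]` and `φ ≤ f' ≤ Φ` a.e. on `(a,b)`, then
`0 ≤ (1/(b−a)) ∫_a^b f'² − ((1/(b−a)) ∫_a^b f')² ≤ (1/4)(Φ−φ)²`. -/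
theorem gruss_derivative_bound (a b φ Φ : ℝ) (hab : a < b) (f f' : ℝ → ℝ)
    (hderiv : ∀ x ∈ Icc a b, HasDerivAt f (f' x) x)
    (hint : IntervalIntegrable f' volume a b)
    (hbound : ∀ᵐ t ∂(volume.restrict (Ioo a b)), φ ≤ f' t ∧ f' t ≤ Φ) :
    0 ≤ (1 / (b - a)) * (∫ t in a..b, (f' t) ^ 2) -
        ((1 / (b - a)) * ∫ t in a..b, f' t) ^ 2 ∧
      (1 / (b - a)) * (∫ t in a..b, (f' t) ^ 2) -
        ((1 / (b - a)) * ∫ t in a..b, f' t) ^ 2 ≤ (1 / 4) * (Φ - φ) ^ 2 :=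
  gruss_derivative_bound_general hab (hint.1.mono_set Ioo_subset_Ioc_self).aemeasurable hbound
end
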